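/- For all positive integers d and n, one has Σ_{k=1}^{⌊(n+1)/2⌋} C(n, 2k−1) / (2k−1)^d = ζ*_n({1}_d; 2)/2. -/

import Mathlib

/-- `ent m α` is the entry `n_{α+1}` (0-indexed access) of the index tuple `m`,
with junk value `1` out of range. -/
def ent {L : ℕ} (m : Fin L → ℕ) (α : ℕ) : ℕ :=
  if h : α < L then m ⟨α, h⟩ else 1

/-- The finite set of index tuples `(n₁,…,n_L)` with `n ≥ n₁ ≥ n₂ ≥ ⋯ ≥ n_L ≥ 1`. -/
def Idx (n L : ℕ) : Finset (Fin L → ℕ) :=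
  (Fintype.piFinset fun _ : Fin L => Finset.Icc 1 n).filter
    fun m => ∀ i j : Fin L, i ≤ j → m j ≤ m i

/-- Generalized multiple harmonic-star value
`ζ*_k(s₁,…,s_d; a) = ∑_{k ≥ n₁ ≥ ⋯ ≥ n_d ≥ 1} a^{n_d}/(n₁^{s₁} ⋯ n_d^{s_d})`. -/
noncomputable def zetaStarK (k : ℕ) (s : List ℕ) (a : ℝ) : ℝ :=
  ∑ m ∈ Idx k s.length,
    a ^ ent m (s.length - 1) / ∏ i : Fin s.length, (m i : ℝ) ^ s.get i

/-- Mneimneh-like sum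
`M_n^{(s₁,…,s_d)}(a,p) = ∑_{k=1}^n C(n,k)·p^k·(1-p)^{n-k}·ζ*_k(s;a)`. -/
noncomputable def M (n : ℕ) (s : List ℕ) (a p : ℝ) : ℝ :=
  ∑ k ∈ Finset.Icc 1 n, (n.choose k : ℝ) * p ^ k * (1 - p) ^ (n - k) * zetaStarK k s a

/-!
For every real `x`, the sum `∑ C(n,k) x^k / k^d` equals `ζ*_n({1}_d; 1+x) - ζ*_n({1}_d; 1)`. Indeed,
`C(j,k)/j = (C(j,k) - C(j-1,k))/k` telescopes to `∑_{k ≤ j ≤ n} C(j,k)/j = C(n,k)/k`, so one more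
factor `1/k` on the binomial side amounts to applying `u ↦ ∑_{j ≤ n} u_j/j`, which is also how `ζ*`
acquires one more leading argument `1`; the case without denominators is the binomial theorem.
Subtracting `x = -1` from `x = 1` leaves twice the odd-indexed terms on the left and
`ζ*_n({1}_d; 2)` on the right, since `ζ*_n({1}_d; 0) = 0`.
-/

open Finset

section BinomialSums

variable {K : Type*} [Semifield K] [CharZero K]

theorem sum_Icc_choose_div {k n : ℕ} (hk : k ≠ 0) (hkn : k ≤ n) :
    ∑ j ∈ Icc k n, (j.choose k : K) / j = n.choose k / k := by
  obtain ⟨k, rfl⟩ := Nat.exists_eq_succ_of_ne_zero hk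
  induction n, hkn using Nat.le_induction with
  | base => simp
  | succ n hkn ih =>
    have pascal : ((n + 1).choose (k + 1) : K) = n.choose k + n.choose (k + 1) :=
      mod_cast Nat.choose_succ_succ n k
    have absorption : ((n + 1).choose (k + 1) : K) / (n + 1 : ℕ) = n.choose k / (k + 1 : ℕ) := by
      rw [div_eq_div_iff (Nat.cast_ne_zero.mpr n.succ_ne_zero)
        (Nat.cast_ne_zero.mpr k.succ_ne_zero), mul_comm (n.choose k : K)]
      exact_mod_cast (Nat.add_one_mul_choose_eq n k).symm
    rw [sum_Icc_succ_top (by omega), ih, absorption, pascal]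
    ring

theorem sum_choose_mul_div_eq_sum_sum_div (f : ℕ → K) (n : ℕ) :
    ∑ k ∈ Icc 1 n, (n.choose k : K) * (f k / k) =
      ∑ j ∈ Icc 1 n, (∑ k ∈ Icc 1 j, (j.choose k : K) * f k) / j :=
  calc
    _ = ∑ k ∈ Icc 1 n, (∑ j ∈ Icc k n, (j.choose k : K) / j) * f k := by
      refine sum_congr rfl fun k hk => ?_
      obtain ⟨hk, hkn⟩ := mem_Icc.mp hk
      rw [sum_Icc_choose_div (Nat.ne_of_gt hk) hkn]
      ring
    _ = ∑ k ∈ Icc 1 n, ∑ j ∈ Icc k n, (j.choose k : K) * f k / j := by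
      simp only [sum_mul, div_mul_eq_mul_div]
    _ = ∑ j ∈ Icc 1 n, ∑ k ∈ Icc 1 j, (j.choose k : K) * f k / j :=
      sum_comm' fun k j => by simp only [mem_Icc]; omega
    _ = _ := by simp only [sum_div]

theorem sum_Icc_choose_mul_pow {R : Type*} [CommRing R] (x : R) (n : ℕ) :
    ∑ k ∈ Icc 1 n, (n.choose k : R) * x ^ k = (1 + x) ^ n - 1 := by
  rw [add_comm 1 x, add_pow, range_eq_Ico, sum_eq_sum_Ico_succ_bot (Nat.add_one_pos n), zero_add,
    Ico_add_one_right_eq_Icc]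
  simp [mul_comm]

theorem sum_Icc_filter_odd {M : Type*} [AddCommMonoid M] (f : ℕ → M) (n : ℕ) :
    ∑ k ∈ Icc 1 n with Odd k, f k = ∑ k ∈ Icc 1 ((n + 1) / 2), f (2 * k - 1) := by
  refine sum_nbij' (fun k => (k + 1) / 2) (fun k => 2 * k - 1) ?_ ?_ ?_ ?_ ?_ <;>
    simp only [mem_filter, mem_Icc, Nat.odd_iff] <;> grind

theorem sum_sub_sum_neg_one_pow_mul {R : Type*} [Ring R] (f : ℕ → R) (s : Finset ℕ) :
    ∑ k ∈ s, f k - ∑ k ∈ s, (-1) ^ k * f k = 2 * ∑ k ∈ s with Odd k, f k := by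
  rw [← sum_sub_distrib, sum_filter, mul_sum]
  refine sum_congr rfl fun k _ => ?_
  obtain hk | hk := Nat.even_or_odd k
  · simp [hk.neg_one_pow, Nat.not_odd_iff_even.mpr hk]
  · simp [hk.neg_one_pow, hk, two_mul]

end BinomialSums

section IndexTuples

variable {n L : ℕ}

theorem mem_Idx {m : Fin L → ℕ} :
    m ∈ Idx n L ↔ (∀ i, 1 ≤ m i ∧ m i ≤ n) ∧ Antitone m := by
  simp [Idx, Antitone]

theorem Idx_zero_right : Idx n 0 = univ :=
  eq_univ_of_forall fun m => mem_Idx.mpr ⟨fun i => i.elim0, Subsingleton.antitone m⟩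

theorem antitone_cons {α : Type*} [Preorder α] {a : α} {m : Fin L → α} :
    Antitone (Fin.cons a m : Fin (L + 1) → α) ↔ (∀ i, m i ≤ a) ∧ Antitone m := by
  simp [Antitone, Fin.forall_fin_succ]

theorem cons_mem_Idx {j : ℕ} {m : Fin L → ℕ} :
    (Fin.cons j m : Fin (L + 1) → ℕ) ∈ Idx n (L + 1) ↔ j ∈ Icc 1 n ∧ m ∈ Idx j L := by
  simp only [mem_Idx, antitone_cons, Fin.forall_fin_succ, Fin.cons_zero, Fin.cons_succ, mem_Icc]
  grind

theorem sum_Idx_succ {M : Type*} [AddCommMonoid M] (f : (Fin (L + 1) → ℕ) → M) :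
    ∑ m ∈ Idx n (L + 1), f m = ∑ j ∈ Icc 1 n, ∑ m ∈ Idx j L, f (Fin.cons j m) := by
  rw [sum_sigma']
  symm
  refine sum_bij' (fun p _ => Fin.cons p.1 p.2) (fun m _ => ⟨m 0, Fin.tail m⟩) ?_ ?_ ?_ ?_ ?_
  · exact fun p hp => cons_mem_Idx.mpr (mem_sigma.mp hp)
  · intro m hm
    rw [← Fin.cons_self_tail m] at hm
    exact mem_sigma.mpr (cons_mem_Idx.mp hm)
  all_goals simp

theorem one_le_ent {m : Fin L → ℕ} (hm : m ∈ Idx n L) (α : ℕ) : 1 ≤ ent m α := by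
  unfold ent
  split_ifs with h
  · exact ((mem_Idx.mp hm).1 ⟨α, h⟩).1
  · exact le_rfl

theorem ent_cons_succ (j : ℕ) (m : Fin L → ℕ) (α : ℕ) :
    ent (Fin.cons j m : Fin (L + 1) → ℕ) (α + 1) = ent m α := by
  by_cases h : α < L
  · simpa [ent, h] using Fin.cons_succ (α := fun _ => ℕ) j m ⟨α, h⟩
  · simp [ent, h]

end IndexTuples

section HarmonicStar

theorem zetaStarK_singleton (n r : ℕ) (a : ℝ) :
    zetaStarK n [r] a = ∑ j ∈ Icc 1 n, a ^ j / (j : ℝ) ^ r := by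
  simp only [zetaStarK, List.length_singleton]
  rw [sum_Idx_succ]
  simp [Idx_zero_right, ent]

theorem zetaStarK_cons {s : List ℕ} (hs : s ≠ []) (n r : ℕ) (a : ℝ) :
    zetaStarK n (r :: s) a = ∑ j ∈ Icc 1 n, zetaStarK j s a / (j : ℝ) ^ r := by
  have length_eq : s.length = s.length - 1 + 1 :=
    (Nat.sub_add_cancel (List.length_pos_of_ne_nil hs)).symm
  simp only [zetaStarK, List.length_cons, sum_div]
  rw [sum_Idx_succ]
  refine sum_congr rfl fun j _ => sum_congr rfl fun m _ => ?_
  have last_entry : ent (Fin.cons j m : Fin (s.length + 1) → ℕ) (s.length + 1 - 1) =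
      ent m (s.length - 1) := by
    rw [← ent_cons_succ j m, ← length_eq, Nat.add_sub_cancel]
  rw [last_entry, Fin.prod_univ_succ, div_div, mul_comm]
  simp

theorem zetaStarK_zero_right (n : ℕ) (s : List ℕ) : zetaStarK n s 0 = 0 :=
  sum_eq_zero fun _ hm => by
    rw [zero_pow (Nat.ne_of_gt (one_le_ent hm _)), zero_div]

theorem sum_choose_mul_pow_div_pow (x : ℝ) (d n : ℕ) :
    ∑ k ∈ Icc 1 n, (n.choose k : ℝ) * (x ^ k / (k : ℝ) ^ (d + 1)) =
      zetaStarK n (List.replicate (d + 1) 1) (1 + x) -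
        zetaStarK n (List.replicate (d + 1) 1) 1 := by
  induction d generalizing n with
  | zero =>
    simp only [zero_add, List.replicate_one, zetaStarK_singleton, pow_one,
      sum_choose_mul_div_eq_sum_sum_div, sum_Icc_choose_mul_pow, one_pow, sub_div,
      sum_sub_distrib]
  | succ d ih =>
    simp only [pow_succ _ (d + 1), ← div_div]
    rw [sum_choose_mul_div_eq_sum_sum_div, List.replicate_succ, zetaStarK_cons (by simp),
      zetaStarK_cons (by simp)]
    simp only [ih, pow_one, sub_div, sum_sub_distrib]

end HarmonicStar

/-- Odd counterpart of Dilcher's formula. -/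
theorem stmt_8 (d n : ℕ) (hd : 0 < d) (hn : 0 < n) :
    ∑ k ∈ Finset.Icc 1 ((n + 1) / 2),
        (n.choose (2 * k - 1) : ℝ) / ((2 * k - 1 : ℕ) : ℝ) ^ d =
      zetaStarK n (List.replicate d 1) 2 / 2 := by
  obtain ⟨d, rfl⟩ := Nat.exists_eq_succ_of_ne_zero hd.ne'
  let f : ℕ → ℝ := fun k => n.choose k / (k : ℝ) ^ (d + 1)
  have sum_one : ∑ k ∈ Icc 1 n, f k = zetaStarK n (List.replicate (d + 1) 1) 2 -
      zetaStarK n (List.replicate (d + 1) 1) 1 := by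
    simpa [f, div_eq_mul_inv, one_add_one_eq_two] using sum_choose_mul_pow_div_pow 1 d n
  have sum_neg_one : ∑ k ∈ Icc 1 n, (-1) ^ k * f k =
      -zetaStarK n (List.replicate (d + 1) 1) 1 := by
    simpa [f, mul_div_left_comm, zetaStarK_zero_right] using sum_choose_mul_pow_div_pow (-1) d n
  have twice_odd := sum_sub_sum_neg_one_pow_mul f (Icc 1 n)
  rw [sum_one, sum_neg_one, sum_Icc_filter_odd] at twice_odd
  linarith
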